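/- arXiv:1908.08771 — 2 statements merged into one kernel-verified Lean document; each statement's English description precedes it below -/
import Mathlib

section
/- (Lemma 1.) Let P ≥ 1, let w ∈ ℝ^P be nonzero, let Σ ∈ ℝ^{P×P} be symmetric positive-definite, let m₁*, m₂* ∈ ℝ^P, and let ν₁*, ν₂* > 0. Then the double integral over ℝ^P × ℝ^P of Φ( wᵀ(μ₂ − μ₁) / √(2 wᵀΣw) ) against the product of the Gaussian densities f_{m₁*, Σ/ν₁*}(μ₁) and f_{m₂*, Σ/ν₂*}(μ₂) equals Φ( ( wᵀ(m₂* − m₁*) / √(2 wᵀΣw) ) · √( 2 ν₁* ν₂* / (ν₁* + ν₂* + 2 ν₁* ν₂*) ) ). -/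
open MeasureTheory Real
open scoped Matrix

/-- The standard normal cumulative distribution function `Φ`. -/
noncomputable def stdCdf (x : ℝ) : ℝ :=
  ∫ t in Set.Iio x, (2 * Real.pi) ^ (-(1:ℝ)/2) * Real.exp (-t ^ 2 / 2)

/-- Gaussian density on `ℝ^P` with mean `m` and covariance `C`. -/
noncomputable def gaussDensity {P : ℕ} (m : Fin P → ℝ) (C : Matrix (Fin P) (Fin P) ℝ)
    (x : Fin P → ℝ) : ℝ :=
  (2 * Real.pi) ^ (-(P : ℝ) / 2) * C.det ^ (-(1:ℝ)/2) *
    Real.exp (-(1/2) * ((x - m) ⬝ᵥ C⁻¹.mulVec (x - m)))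

/-- The multivariate gamma function `Γ_P`. -/
noncomputable def multiGamma (P : ℕ) (a : ℝ) : ℝ :=
  Real.pi ^ ((P : ℝ) * ((P : ℝ) - 1) / 4) * ∏ j ∈ Finset.range P, Real.Gamma (a - (j : ℝ) / 2)

/-- The inverse-Wishart density with scale matrix `S` and degrees of freedom `κ`. -/
noncomputable def invWishartDensity {P : ℕ} (S : Matrix (Fin P) (Fin P) ℝ) (κ : ℝ)
    (V : Matrix (Fin P) (Fin P) ℝ) : ℝ :=
  S.det ^ (κ / 2) / (2 ^ (κ * (P : ℝ) / 2) * multiGamma P (κ / 2)) *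
    V.det ^ (-(κ + (P : ℝ) + 1) / 2) * Real.exp (-(1/2) * (S * V⁻¹).trace)

/-- The regularized incomplete beta function `I(x; a, b)`. -/
noncomputable def regIncBeta (x a b : ℝ) : ℝ :=
  (Real.Gamma (a + b) / (Real.Gamma a * Real.Gamma b)) *
    ∫ t in (0:ℝ)..x, t ^ (a - 1) * (1 - t) ^ (b - 1)

open ProbabilityTheory

lemma stdCdf_eq (x : ℝ) : stdCdf x = (gaussianReal 0 1).real (Set.Iio x) := by
  rw [Measure.real, gaussianReal_apply_eq_integral _ one_ne_zero, ENNReal.toReal_ofReal]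
  · unfold stdCdf gaussianPDFReal
    congr 1
    ext t
    congr 1
    · rw [Real.sqrt_eq_rpow, ← Real.rpow_neg (by positivity)]
      norm_num
    · simp
  · exact setIntegral_nonneg measurableSet_Iio fun t _ => gaussianPDFReal_nonneg _ _ _

lemma stdCdf_mono : Monotone stdCdf := by
  intro a b h
  rw [stdCdf_eq, stdCdf_eq]
  exact measureReal_mono (Set.Iio_subset_Iio h)

lemma gaussianReal_Iio (m : ℝ) (v : NNReal) (hv : v ≠ 0) (b : ℝ) :
    (gaussianReal m v).real (Set.Iio b) = stdCdf ((b - m) / √v) := by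
  have h1 : (gaussianReal 0 1).map (fun x => √v * x) = gaussianReal 0 v := by
    rw [gaussianReal_map_const_mul]
    congr 1
    · simp
    · ext; simp
  have h2 : (gaussianReal 0 v).map (fun x => x + m) = gaussianReal m v := by
    rw [gaussianReal_map_add_const]; simp
  have hv' : 0 < √(v:ℝ) := by
    apply Real.sqrt_pos.2; exact_mod_cast pos_iff_ne_zero.2 hv
  rw [← h2, ← h1, stdCdf_eq, Measure.map_map (by fun_prop) (by fun_prop), Measure.real, Measure.real,
    Measure.map_apply (by fun_prop) measurableSet_Iio]
  congr 2
  ext x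
  simp only [Set.mem_preimage, Function.comp, Set.mem_Iio]
  rw [lt_div_iff₀ hv', mul_comm]
  constructor <;> intro h <;> linarith

lemma integral_stdCdf_affine (a : ℝ) (v : NNReal) (α β : ℝ) :
    ∫ y, stdCdf (α * y + β) ∂(gaussianReal a v) =
      stdCdf ((α * a + β) / √(1 + α ^ 2 * v)) := by
  have hm : Measurable fun y : ℝ => stdCdf (α * y + β) :=
    stdCdf_mono.measurable.comp (by fun_prop)
  have hmap := gaussianReal_map_const_mul (μ := a) (v := v) (-α)
  have hconv := gaussianReal_conv_gaussianReal (m₁ := -α * a) (m₂ := 0)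
    (v₁ := .mk ((-α) ^ 2) (sq_nonneg _) * v) (v₂ := 1)
  have key : (gaussianReal (-α * a + 0) (.mk ((-α) ^ 2) (sq_nonneg _) * v + 1)) (Set.Iio β) =
      ∫⁻ y, (gaussianReal 0 1) (Set.Iio (α * y + β)) ∂(gaussianReal a v) := by
    rw [← hconv, ← hmap, ← lintegral_indicator_one measurableSet_Iio,
      Measure.lintegral_conv (by measurability), lintegral_map _ (by fun_prop)]
    · congr 1
      ext y
      rw [← lintegral_indicator_one measurableSet_Iio]
      congr 1
      ext z
      simp only [Set.indicator, Set.mem_Iio]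
      congr 1
      apply propext
      constructor <;> intro h <;> linarith
    · refine Measurable.lintegral_prod_right' (ν := gaussianReal 0 1) (f := fun p : ℝ × ℝ => (Set.Iio β).indicator 1 (p.1 + p.2)) ?_
      exact (measurable_one.indicator measurableSet_Iio).comp (by fun_prop)
  have h2 := gaussianReal_Iio (-α * a + 0) (.mk ((-α) ^ 2) (sq_nonneg _) * v + 1) (by simp) β
  rw [Measure.real, key] at h2
  rw [integral_eq_lintegral_of_nonneg_ae]
  · have : ∀ y, ENNReal.ofReal (stdCdf (α * y + β)) = gaussianReal 0 1 (Set.Iio (α * y + β)) := by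
      intro y; rw [stdCdf_eq, ofReal_measureReal]
    simp_rw [this, h2]
    congr 2
    · ring
    · push_cast; congr 1; simp; ring
  · exact Filter.Eventually.of_forall fun y => by
      simp only [stdCdf_eq]; exact measureReal_nonneg
  · exact hm.aestronglyMeasurable

/-- the standard Gaussian product measure has the product density -/
lemma pi_gaussian_withDensity (P : ℕ) :
    (Measure.pi fun _ : Fin P => gaussianReal 0 1) =
      (volume : Measure (Fin P → ℝ)).withDensity
        (fun y => ENNReal.ofReal (∏ i, gaussianPDFReal 0 1 (y i))) := by
  refine (Measure.pi_eq fun s hs => ?_)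
  rw [withDensity_apply _ (MeasurableSet.univ_pi hs), volume_pi, Measure.restrict_pi_pi,
    ← ofReal_integral_eq_lintegral_ofReal, integral_fintype_prod_eq_prod, ENNReal.ofReal_prod_of_nonneg]
  · exact Finset.prod_congr rfl fun i _ => (gaussianReal_apply_eq_integral _ one_ne_zero _).symm
  · exact fun i _ => integral_nonneg fun t => gaussianPDFReal_nonneg _ _ _
  · exact Integrable.fintype_prod (fun i => (integrable_gaussianPDFReal 0 1).restrict)
  · exact Filter.Eventually.of_forall fun y => Finset.prod_nonneg fun i _ => gaussianPDFReal_nonneg _ _ _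

lemma pi_gaussian_map {P : ℕ} (a : Fin P → ℝ) :
    (Measure.pi fun _ : Fin P => gaussianReal 0 1).map (fun y => a ⬝ᵥ y) =
      gaussianReal 0 (a ⬝ᵥ a).toNNReal := by
  have hmeas : Measurable fun y : Fin P → ℝ => a ⬝ᵥ y := by
    unfold dotProduct; fun_prop
  have : IsProbabilityMeasure ((Measure.pi fun _ : Fin P => gaussianReal 0 1).map (fun y => a ⬝ᵥ y)) :=
    Measure.isProbabilityMeasure_map hmeas.aemeasurable
  refine Measure.ext_of_charFun ?_
  ext t
  rw [charFun_apply_real, integral_map hmeas.aemeasurable (by fun_prop), charFun_gaussianReal]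
  have h : ∀ y : Fin P → ℝ, Complex.exp (t * ((a ⬝ᵥ y : ℝ) : ℂ) * Complex.I) =
      ∏ i, Complex.exp (((t * a i : ℝ) : ℂ) * (y i) * Complex.I) := by
    intro y
    rw [← Complex.exp_sum]
    congr 1
    simp only [dotProduct]
    push_cast
    rw [Finset.mul_sum, Finset.sum_mul]
    exact Finset.sum_congr rfl fun i _ => by ring
  simp_rw [h]
  rw [integral_fintype_prod_eq_prod (fun i (x : ℝ) => Complex.exp (((t * a i : ℝ) : ℂ) * x * Complex.I))]
  simp_rw [← charFun_apply_real, charFun_gaussianReal]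
  rw [← Complex.exp_sum]
  congr 1
  have h0 : 0 ≤ a ⬝ᵥ a := Finset.sum_nonneg fun i _ => mul_self_nonneg _
  have h1 : (((a ⬝ᵥ a).toNNReal : ℝ) : ℂ) = ∑ i, (a i : ℂ) * a i := by
    rw [Real.coe_toNNReal _ h0]; simp [dotProduct]
  rw [show (((a ⬝ᵥ a).toNNReal : NNReal) : ℂ) = (((a ⬝ᵥ a).toNNReal : ℝ) : ℂ) from rfl, h1]
  simp only [NNReal.coe_one, Complex.ofReal_one, Complex.ofReal_zero, mul_zero, zero_mul, zero_sub, one_mul, Complex.ofReal_mul]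
  rw [Finset.sum_neg_distrib, Finset.sum_mul, Finset.sum_div]
  congr 1
  exact Finset.sum_congr rfl fun i _ => by ring

lemma integral_linear_change {P : ℕ} (A : Matrix (Fin P) (Fin P) ℝ) (hA : A.det ≠ 0)
    (m : Fin P → ℝ) (F : (Fin P → ℝ) → ℝ) :
    ∫ x, F x = |A.det| * ∫ y, F (A.mulVec y + m) := by
  have h1 := Real.map_matrix_volume_pi_eq_smul_volume_pi hA
  have hinj : Function.Injective (Matrix.toLin' A) := by
    intro x y h
    simp only [Matrix.toLin'_apply] at h
    exact Matrix.mulVec_injective_of_isUnit ((Matrix.isUnit_iff_isUnit_det A).2 (isUnit_iff_ne_zero.2 hA)) h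
  have hemb : MeasurableEmbedding (Matrix.toLin' A) := by
    refine Continuous.measurableEmbedding ?_ hinj
    exact LinearMap.continuous_of_finiteDimensional _
  have h2 := hemb.integral_map (μ := volume) (fun x => F (x + m))
  rw [h1, integral_smul_measure, integral_add_right_eq_self] at h2
  simp only [Matrix.toLin'_apply] at h2
  rw [← h2, ENNReal.toReal_ofReal (abs_nonneg _), abs_inv, smul_eq_mul, ← mul_assoc,
    mul_inv_cancel₀ (abs_ne_zero.2 hA), one_mul]

open scoped MatrixOrder in
open scoped Matrix.Norms.L2Operator in
lemma integral_gaussDensity {P : ℕ} (w m : Fin P → ℝ) (C : Matrix (Fin P) (Fin P) ℝ)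
    (hC : C.PosDef) (g : ℝ → ℝ) (hg : Measurable g) :
    ∫ x, g (w ⬝ᵥ x) * gaussDensity m C x =
      ∫ t, g t ∂(gaussianReal (w ⬝ᵥ m) (w ⬝ᵥ C.mulVec w).toNNReal) := by
  obtain ⟨A, hA⟩ : ∃ A : Matrix (Fin P) (Fin P) ℝ, C = A * Aᵀ := by
    obtain ⟨B, hB⟩ := CStarAlgebra.nonneg_iff_eq_star_mul_self.mp hC.posSemidef.nonneg
    rw [Matrix.star_eq_conjTranspose] at hB
    exact ⟨Bᵀ, by rwa [Matrix.conjTranspose_eq_transpose_of_trivial, ← Matrix.transpose_transpose B, Matrix.transpose_transpose Bᵀ] at hB⟩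
  have hdet : C.det = A.det ^ 2 := by rw [hA, Matrix.det_mul, Matrix.det_transpose, sq]
  have hA0 : A.det ≠ 0 := by
    intro h; have := hC.det_pos; rw [hdet, h] at this; simp at this
  have hu : IsUnit A.det := isUnit_iff_ne_zero.2 hA0
  have hut : IsUnit Aᵀ.det := by rwa [Matrix.det_transpose]
  have hquad : ∀ y, A.mulVec y ⬝ᵥ C⁻¹.mulVec (A.mulVec y) = y ⬝ᵥ y := by
    intro y
    rw [hA, Matrix.mul_inv_rev, Matrix.mulVec_mulVec, Matrix.mul_assoc, Matrix.nonsing_inv_mul _ hu,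
      Matrix.mul_one, ← Matrix.vecMul_transpose, ← Matrix.dotProduct_mulVec, Matrix.mulVec_mulVec,
      Matrix.mul_nonsing_inv _ hut, Matrix.one_mulVec]
  have hdens : ∀ y, |A.det| * gaussDensity m C (A.mulVec y + m) = ∏ i, gaussianPDFReal 0 1 (y i) := by
    intro y
    unfold gaussDensity gaussianPDFReal
    rw [add_sub_cancel_right, hquad, Finset.prod_mul_distrib, ← Real.exp_sum, Finset.prod_const,
      Finset.card_univ, Fintype.card_fin]
    have e1 : C.det ^ (-(1:ℝ)/2) = |A.det|⁻¹ := by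
      rw [hdet, neg_div, Real.rpow_neg (sq_nonneg _), ← Real.sqrt_eq_rpow, Real.sqrt_sq_eq_abs]
    have e2 : (2 * Real.pi) ^ (-(P : ℝ) / 2) = (√(2 * π * (1:NNReal)))⁻¹ ^ P := by
      rw [NNReal.coe_one, mul_one, Real.sqrt_eq_rpow, ← Real.rpow_neg (by positivity),
        ← Real.rpow_natCast, ← Real.rpow_mul (by positivity)]
      congr 1; ring
    have e3 : -(1/2) * (y ⬝ᵥ y) = ∑ i, -(y i - 0) ^ 2 / (2 * ((1:NNReal):ℝ)) := by
      simp only [dotProduct, Finset.mul_sum]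
      exact Finset.sum_congr rfl fun i _ => by simp; ring
    rw [e1, e2, e3]
    have := abs_ne_zero.2 hA0
    field_simp
  have hlin : ∀ y, w ⬝ᵥ (A.mulVec y + m) = (Aᵀ.mulVec w) ⬝ᵥ y + w ⬝ᵥ m := by
    intro y
    rw [dotProduct_add, Matrix.dotProduct_mulVec, Matrix.mulVec_transpose]
  have hvar : w ⬝ᵥ C.mulVec w = (Aᵀ.mulVec w) ⬝ᵥ (Aᵀ.mulVec w) := by
    rw [hA, ← Matrix.mulVec_mulVec, Matrix.dotProduct_mulVec, Matrix.mulVec_transpose]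
  have hlaw : gaussianReal (w ⬝ᵥ m) (w ⬝ᵥ C.mulVec w).toNNReal =
      (Measure.pi fun _ : Fin P => gaussianReal 0 1).map
        (fun y => (Aᵀ.mulVec w) ⬝ᵥ y + w ⬝ᵥ m) := by
    have := gaussianReal_map_add_const (μ := 0) (v := (w ⬝ᵥ C.mulVec w).toNNReal) (w ⬝ᵥ m)
    rw [zero_add] at this
    rw [← this, hvar, ← pi_gaussian_map, Measure.map_map (by fun_prop) (by unfold dotProduct; fun_prop)]
    rfl
  rw [hlaw, integral_map (Measurable.aemeasurable (by unfold dotProduct; fun_prop)) hg.aestronglyMeasurable,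
    pi_gaussian_withDensity, integral_withDensity_eq_integral_toReal_smul,
    integral_linear_change A hA0 m, ← integral_const_mul]
  · congr 1
    ext y
    rw [ENNReal.toReal_ofReal (Finset.prod_nonneg fun i _ => gaussianPDFReal_nonneg _ _ _), ← hdens,
      hlin, smul_eq_mul]
    ring
  · fun_prop
  · exact Filter.Eventually.of_forall fun y => ENNReal.ofReal_lt_top

/-- Lemma 1: integrating the AUC `Φ(wᵀ(μ₂ − μ₁)/√(2wᵀΣw))` over the Gaussian posteriors
of the two class means yields a closed form. -/
theorem stmt1 {P : ℕ} (hP : 1 ≤ P) (w : Fin P → ℝ) (hw : w ≠ 0)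
    (V : Matrix (Fin P) (Fin P) ℝ) (hV : V.IsSymm) (hVpd : V.PosDef)
    (m₁ m₂ : Fin P → ℝ) (ν₁ ν₂ : ℝ) (hν₁ : 0 < ν₁) (hν₂ : 0 < ν₂) :
    (∫ μ₁ : Fin P → ℝ, ∫ μ₂ : Fin P → ℝ,
        stdCdf ((w ⬝ᵥ (μ₂ - μ₁)) / Real.sqrt (2 * (w ⬝ᵥ V.mulVec w))) *
          (gaussDensity m₁ (ν₁⁻¹ • V) μ₁ * gaussDensity m₂ (ν₂⁻¹ • V) μ₂)) =
      stdCdf ((w ⬝ᵥ (m₂ - m₁)) / Real.sqrt (2 * (w ⬝ᵥ V.mulVec w)) *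
        Real.sqrt (2 * ν₁ * ν₂ / (ν₁ + ν₂ + 2 * ν₁ * ν₂))) := by
  have hc : 0 < w ⬝ᵥ V.mulVec w := by simpa using hVpd.dotProduct_mulVec_pos hw
  have hvar : ∀ ν : ℝ, w ⬝ᵥ (ν⁻¹ • V).mulVec w = (w ⬝ᵥ V.mulVec w) / ν := by
    intro ν
    rw [Matrix.smul_mulVec, dotProduct_smul, smul_eq_mul]; ring
  have hC₁ : (ν₁⁻¹ • V).PosDef := hVpd.smul (inv_pos.2 hν₁)
  have hC₂ : (ν₂⁻¹ • V).PosDef := hVpd.smul (inv_pos.2 hν₂)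
  set c := w ⬝ᵥ V.mulVec w with hcdef
  set s := Real.sqrt (2 * c) with hs
  have hs0 : 0 < s := Real.sqrt_pos.2 (by positivity)
  have hs2 : s ^ 2 = 2 * c := Real.sq_sqrt (by positivity)
  have inner : ∀ μ₁ : Fin P → ℝ, (∫ μ₂ : Fin P → ℝ,
        stdCdf ((w ⬝ᵥ (μ₂ - μ₁)) / s) *
          (gaussDensity m₁ (ν₁⁻¹ • V) μ₁ * gaussDensity m₂ (ν₂⁻¹ • V) μ₂)) =
      stdCdf ((-(s * √(1 + 1 / (2 * ν₂)))⁻¹) * (w ⬝ᵥ μ₁) + (w ⬝ᵥ m₂) / (s * √(1 + 1 / (2 * ν₂)))) *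
        gaussDensity m₁ (ν₁⁻¹ • V) μ₁ := by
    intro μ₁
    have h1 := integral_gaussDensity w m₂ _ hC₂ (fun t => stdCdf (s⁻¹ * t + (-(w ⬝ᵥ μ₁) / s)))
      (stdCdf_mono.measurable.comp (by fun_prop))
    rw [integral_stdCdf_affine, hvar, Real.coe_toNNReal _ (by positivity)] at h1
    have e : 1 + s⁻¹ ^ 2 * (c / ν₂) = 1 + 1 / (2 * ν₂) := by
      rw [inv_pow, hs2]; field_simp
    rw [e] at h1
    calc _ = ∫ x, gaussDensity m₁ (ν₁⁻¹ • V) μ₁ *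
          (stdCdf (s⁻¹ * (w ⬝ᵥ x) + (-(w ⬝ᵥ μ₁) / s)) * gaussDensity m₂ (ν₂⁻¹ • V) x) := by
          congr 1; ext x
          rw [dotProduct_sub, show (w ⬝ᵥ x - w ⬝ᵥ μ₁) / s = s⁻¹ * (w ⬝ᵥ x) + (-(w ⬝ᵥ μ₁) / s) by ring]
          ring
      _ = _ := by
          rw [integral_const_mul, h1, mul_comm]
          congr 2
          field_simp
          ring
  simp_rw [inner]
  have h2 := integral_gaussDensity w m₁ _ hC₁ (fun t =>
      stdCdf ((-(s * √(1 + 1 / (2 * ν₂)))⁻¹) * t + (w ⬝ᵥ m₂) / (s * √(1 + 1 / (2 * ν₂)))))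
      (stdCdf_mono.measurable.comp (by fun_prop))
  rw [h2, integral_stdCdf_affine, hvar, Real.coe_toNNReal _ (by positivity)]
  congr 1
  set r := √(1 + 1 / (2 * ν₂)) with hr
  have hr0 : 0 < r := Real.sqrt_pos.2 (by positivity)
  have hr2 : r ^ 2 = 1 + 1 / (2 * ν₂) := Real.sq_sqrt (by positivity)
  have e : √(2 * ν₁ * ν₂ / (ν₁ + ν₂ + 2 * ν₁ * ν₂)) =
      (r * √(1 + (-(s * r)⁻¹) ^ 2 * (c / ν₁)))⁻¹ := by
    rw [hr, ← Real.sqrt_mul (by positivity), ← hr, ← Real.sqrt_inv]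
    congr 1
    have : (-(s * r)⁻¹) ^ 2 = (2 * c * (1 + 1 / (2 * ν₂)))⁻¹ := by
      rw [neg_sq, inv_pow, mul_pow, hs2, hr2]
    rw [this]
    field_simp
    ring
  rw [e, dotProduct_sub]
  have : 0 < √(1 + (-(s * r)⁻¹) ^ 2 * (c / ν₁)) := Real.sqrt_pos.2 (by positivity)
  generalize √(1 + (-(s * r)⁻¹) ^ 2 * (c / ν₁)) = q at *
  field_simp
  ring
end

section
/- (Scalar version of the inverse-Wishart expectation of the Gaussian CDF.) Let s > 0, k > 0, and A ∈ ℝ. If a positive random variable T has the inverse-gamma density p(t) = (s/2)^{k/2} / Γ(k/2) · t^{−k/2 − 1} exp(−s/(2t)) for t > 0 (i.e., T is distributed as s times an inverse-chi-square variable with k degrees of freedom), then ∫₀^∞ Φ( A / √t ) p(t) dt = ½ + (sgn(A)/2) · I( A² / (A² + s) ; ½, k/2 ). -/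
open MeasureTheory Real
open scoped Matrix

lemma aux_const : (2 * Real.pi) ^ (-(1:ℝ)/2) = (√(2 * Real.pi))⁻¹ := by
  rw [neg_div, Real.rpow_neg (by positivity), Real.sqrt_eq_rpow]

lemma aux_gauss_int : Integrable (fun t : ℝ => Real.exp (-t ^ 2 / 2)) := by
  have h := integrable_exp_neg_mul_sq (b := 1/2) (by norm_num)
  refine h.congr (Filter.Eventually.of_forall fun t => ?_)
  show Real.exp _ = Real.exp _
  congr 1; ring

lemma aux_gauss_half : ∫ t in Set.Iic (0:ℝ), Real.exp (-t ^ 2 / 2) = √(2 * Real.pi) / 2 := by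
  have h := integral_gaussian_Ioi (1/2)
  have h2 := integral_comp_neg_Iic (0:ℝ) (fun t : ℝ => Real.exp (-(1/2) * t ^ 2))
  rw [neg_zero, h] at h2
  rw [show 2 * Real.pi = Real.pi / (1/2) by ring, ← h2]
  congr 1; ext t; congr 1; ring

noncomputable def psi0 (x : ℝ) : ℝ := ∫ u in (0:ℝ)..x, Real.exp (-u ^ 2 / 2)

lemma stdCdf_eq_s5 (x : ℝ) : stdCdf x = 1 / 2 + (√(2 * Real.pi))⁻¹ * psi0 x := by
  unfold stdCdf psi0
  rw [← integral_Iic_eq_integral_Iio, integral_const_mul, aux_const,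
    ← intervalIntegral.integral_Iic_sub_Iic aux_gauss_int.integrableOn aux_gauss_int.integrableOn,
    aux_gauss_half]
  have : √(2 * Real.pi) ≠ 0 := by positivity
  field_simp
  ring

lemma psi0_neg (x : ℝ) : psi0 (-x) = - psi0 x := by
  unfold psi0
  have h := intervalIntegral.integral_comp_neg (a := 0) (b := x) (fun u : ℝ => Real.exp (-u ^ 2 / 2))
  rw [intervalIntegral.integral_symm]
  simp only [neg_zero, neg_sq] at h ⊢
  rw [h]

lemma psi0_scale (A t : ℝ) (ht : 0 < t) :
    psi0 (A / √t) = ∫ v in (0:ℝ)..A, t ^ (-(1/2:ℝ)) * Real.exp (-v ^ 2 / (2 * t)) := by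
  unfold psi0
  have hst : √t ≠ 0 := by positivity
  have h := intervalIntegral.inv_smul_integral_comp_div (a := 0) (b := A)
    (fun u : ℝ => Real.exp (-u ^ 2 / 2)) (√t)
  rw [zero_div] at h
  rw [← h, intervalIntegral.integral_const_mul, smul_eq_mul, Real.rpow_neg ht.le,
    ← Real.sqrt_eq_rpow]
  congr 2
  ext v
  rw [div_pow, Real.sq_sqrt ht.le]
  congr 1
  field_simp

lemma invgamma (a b : ℝ) (ha : 0 < a) (hb : 0 < b) :
    IntegrableOn (fun t : ℝ => t ^ (-a - 1) * Real.exp (-b / t)) (Set.Ioi 0) ∧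
    ∫ t in Set.Ioi (0:ℝ), t ^ (-a - 1) * Real.exp (-b / t) = Real.Gamma a * b ^ (-a) := by
  have key : ∀ t ∈ Set.Ioi (0:ℝ), (|(-1:ℝ)| * t ^ ((-1:ℝ) - 1)) •
      (fun y : ℝ => y ^ (a - 1) * Real.exp (-(b * y))) (t ^ (-1:ℝ)) =
      t ^ (-a - 1) * Real.exp (-b / t) := by
    intro t ht
    have ht : 0 < t := ht
    simp only [abs_neg, abs_one, one_mul, smul_eq_mul]
    rw [← mul_assoc, ← Real.rpow_mul ht.le, ← Real.rpow_add ht, Real.rpow_neg_one]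
    congr 2
    · ring
    · field_simp
  constructor
  · have h1 : IntegrableOn (fun y : ℝ => y ^ (a - 1) * Real.exp (-(b * y))) (Set.Ioi 0) := by
      have := integrableOn_rpow_mul_exp_neg_mul_rpow (s := a - 1) (p := 1) (b := b) (by linarith) (by norm_num) hb
      simpa using this
    rw [← integrableOn_Ioi_comp_rpow_iff _ (p := -1) (by norm_num)] at h1
    exact h1.congr_fun key measurableSet_Ioi
  · rw [← setIntegral_congr_fun measurableSet_Ioi key, integral_comp_rpow_Ioi (fun y : ℝ => y ^ (a - 1) * Real.exp (-(b * y))) (p := -1) (by norm_num),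
      Real.integral_rpow_mul_exp_neg_mul_Ioi ha hb, Real.rpow_neg hb.le, one_div, Real.inv_rpow hb.le, mul_comm]

/-- The joint integrand. -/
noncomputable def jointF (s k : ℝ) (p : ℝ × ℝ) : ℝ :=
  p.1 ^ (-((k+1)/2) - 1) * Real.exp (-((s + p.2 ^ 2)/2) / p.1)

lemma jointF_int (s k A : ℝ) (hs : 0 < s) (hk : 0 < k) :
    Integrable (jointF s k)
      ((volume.restrict (Set.Ioi (0:ℝ))).prod (volume.restrict (Set.Ioc 0 A))) := by
  have h1 := (invgamma ((k+1)/2) (s/2) (by linarith) (by linarith)).1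
  have h2 : Integrable (fun _ : ℝ => (1:ℝ)) (volume.restrict (Set.Ioc 0 A)) := integrable_const _
  refine (Integrable.mul_prod h1 h2).mono' ?_ ?_
  · apply Measurable.aestronglyMeasurable
    unfold jointF
    fun_prop
  · rw [Measure.prod_restrict]
    refine (ae_restrict_iff' (measurableSet_Ioi.prod measurableSet_Ioc)).2
      (Filter.Eventually.of_forall ?_)
    rintro ⟨t, v⟩ ⟨ht, -⟩
    have ht : 0 < t := ht
    simp only [jointF, mul_one]
    rw [Real.norm_of_nonneg (by positivity)]
    gcongr
    nlinarith [sq_nonneg v]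

lemma psi_part (s k A t : ℝ) (hA : 0 ≤ A) (ht : 0 < t) :
    psi0 (A / √t) * (t ^ (-k / 2 - 1) * Real.exp (-s / (2 * t)))
      = ∫ v in Set.Ioc 0 A, jointF s k (t, v) := by
  rw [psi0_scale A t ht, ← intervalIntegral.integral_mul_const,
    intervalIntegral.integral_of_le hA]
  congr 1
  ext v
  simp only [jointF]
  rw [show -((s + v ^ 2)/2) / t = -v ^ 2 / (2 * t) + -s / (2 * t) by field_simp; ring,
    Real.exp_add, show -((k+1)/2) - 1 = -(1/2) + (-k / 2 - 1) by ring, Real.rpow_add ht]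
  ring

lemma subst_beta (s k A : ℝ) (hs : 0 < s) (hA : 0 < A) :
    ∫ x in (0:ℝ)..(A ^ 2 / (A ^ 2 + s)), x ^ ((1/2:ℝ) - 1) * (1 - x) ^ (k / 2 - 1)
      = 2 * s ^ (k/2) * ∫ v in Set.Ioc 0 A, (s + v ^ 2) ^ (-((k+1)/2)) := by
  set f : ℝ → ℝ := fun v => v ^ 2 / (v ^ 2 + s) with hf
  have hpos : ∀ v : ℝ, 0 < v ^ 2 + s := fun v => by positivity
  have hmono : StrictMonoOn f (Set.Ici 0) := by
    intro x hx y hy hxy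
    have hx : 0 ≤ x := hx
    simp only [hf]
    rw [div_lt_div_iff₀ (hpos x) (hpos y)]
    nlinarith [mul_pos hs (show 0 < y ^ 2 - x ^ 2 by nlinarith)]
  have hcont : Continuous f := by
    simp only [hf]
    exact Continuous.div (by fun_prop) (by fun_prop) (fun v => (hpos v).ne')
  have himg : f '' Set.Ioo 0 A = Set.Ioo 0 (f A) := by
    have h0 : f 0 = 0 := by simp [hf]
    apply Set.Subset.antisymm
    · rintro _ ⟨v, ⟨h1, h2⟩, rfl⟩
      exact ⟨h0 ▸ hmono (Set.mem_Ici.2 le_rfl) h1.le h1, hmono h1.le hA.le h2⟩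
    · have := intermediate_value_Ioo hA.le hcont.continuousOn
      rwa [h0] at this
  have hder : ∀ v ∈ Set.Ioo 0 A, HasDerivWithinAt f (2 * v * s / (v ^ 2 + s) ^ 2) (Set.Ioo 0 A) v := by
    intro v _
    have h := ((hasDerivAt_pow 2 v).div ((hasDerivAt_pow 2 v).add_const s) (hpos v).ne').hasDerivWithinAt (s := Set.Ioo 0 A)
    refine h.congr_deriv ?_
    congr 1
    push_cast
    ring
  have hinj : Set.InjOn f (Set.Ioo 0 A) :=
    hmono.injOn.mono (fun v hv => hv.1.le)
  have hfA : 0 ≤ f A := by simp only [hf]; positivity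
  rw [intervalIntegral.integral_of_le hfA, integral_Ioc_eq_integral_Ioo, ← himg,
    integral_image_eq_integral_abs_deriv_smul measurableSet_Ioo hder hinj,
    integral_Ioc_eq_integral_Ioo, ← integral_const_mul]
  refine setIntegral_congr_fun measurableSet_Ioo ?_
  intro v hv
  have hv0 : 0 < v := hv.1
  have hw := hpos v
  simp only [hf, smul_eq_mul]
  rw [abs_of_nonneg (by positivity)]
  have e1 : 1 - v ^ 2 / (v ^ 2 + s) = s / (v ^ 2 + s) := by field_simp; ring
  rw [e1, Real.div_rpow (by positivity) hw.le, Real.div_rpow hs.le hw.le, add_comm s]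
  have e2 : (v ^ 2) ^ ((1/2:ℝ) - 1) = v⁻¹ := by
    rw [← Real.rpow_natCast, ← Real.rpow_mul hv0.le, ← Real.rpow_neg_one]
    norm_num
  have e3 : (v ^ 2 + s) ^ (-((k+1)/2)) =
      ((v ^ 2 + s) ^ 2)⁻¹ * ((v ^ 2 + s) ^ ((1/2:ℝ) - 1))⁻¹ * ((v ^ 2 + s) ^ (k/2-1))⁻¹ := by
    rw [← Real.rpow_natCast (v ^ 2 + s) 2, ← Real.rpow_neg hw.le, ← Real.rpow_neg hw.le, ← Real.rpow_neg hw.le,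
      ← Real.rpow_add hw, ← Real.rpow_add hw]
    congr 1
    push_cast
    ring
  have e4 : s ^ (k/2) = s ^ (k/2-1) * s := by
    rw [← Real.rpow_add_one hs.ne']; congr 1; ring
  rw [e2, e3, e4]
  field_simp

lemma main_pos (s k : ℝ) (hs : 0 < s) (hk : 0 < k) (A : ℝ) (hA : 0 < A) :
    IntegrableOn (fun t => psi0 (A / √t) * (t ^ (-k / 2 - 1) * Real.exp (-s / (2 * t))))
      (Set.Ioi 0) ∧
    (√(2 * Real.pi))⁻¹ * ((s / 2) ^ (k / 2) / Real.Gamma (k / 2)) *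
      ∫ t in Set.Ioi (0:ℝ), psi0 (A / √t) * (t ^ (-k / 2 - 1) * Real.exp (-s / (2 * t)))
      = 1 / 2 * regIncBeta (A ^ 2 / (A ^ 2 + s)) (1 / 2) (k / 2) := by
  have hF := jointF_int s k A hs hk
  have hc : ∀ t ∈ Set.Ioi (0:ℝ), ∫ v in Set.Ioc 0 A, jointF s k (t, v) =
      psi0 (A / √t) * (t ^ (-k / 2 - 1) * Real.exp (-s / (2 * t))) :=
    fun t ht => (psi_part s k A t hA.le ht).symm
  refine ⟨IntegrableOn.congr_fun hF.integral_prod_left hc measurableSet_Ioi, ?_⟩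
  rw [← setIntegral_congr_fun measurableSet_Ioi hc, integral_integral_swap (f := fun t v => jointF s k (t, v)) hF]
  have hin : ∀ v : ℝ, ∫ t in Set.Ioi (0:ℝ), jointF s k (t, v)
      = Real.Gamma ((k+1)/2) * 2 ^ ((k+1)/2) * (s + v ^ 2) ^ (-((k+1)/2)) := by
    intro v
    have := (invgamma ((k+1)/2) ((s + v^2)/2) (by linarith) (by positivity)).2
    simp only [jointF]
    rw [this, Real.div_rpow (by positivity) (by norm_num), Real.rpow_neg (x := 2) (by norm_num)]
    field_simp
  simp only [hin]
  rw [integral_const_mul]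
  unfold regIncBeta
  rw [subst_beta s k A hs hA, Real.Gamma_one_half_eq, Real.div_rpow hs.le (by norm_num),
    show (k+1)/2 = 1/2 + k/2 by ring, Real.rpow_add (by norm_num), ← Real.sqrt_eq_rpow,
    Real.sqrt_mul (by norm_num)]
  have g1 := (Real.Gamma_pos_of_pos (show 0 < k/2 by linarith)).ne'
  have g2 : √Real.pi ≠ 0 := by positivity
  have g3 : √(2:ℝ) ≠ 0 := by positivity
  have g4 : (2:ℝ) ^ (k/2) ≠ 0 := by positivity
  field_simp

lemma main_any (s k : ℝ) (hs : 0 < s) (hk : 0 < k) (A : ℝ) :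
    IntegrableOn (fun t => psi0 (A / √t) * (t ^ (-k / 2 - 1) * Real.exp (-s / (2 * t))))
      (Set.Ioi 0) ∧
    (√(2 * Real.pi))⁻¹ * ((s / 2) ^ (k / 2) / Real.Gamma (k / 2)) *
      ∫ t in Set.Ioi (0:ℝ), psi0 (A / √t) * (t ^ (-k / 2 - 1) * Real.exp (-s / (2 * t)))
      = Real.sign A / 2 * regIncBeta (A ^ 2 / (A ^ 2 + s)) (1 / 2) (k / 2) := by
  rcases lt_trichotomy A 0 with h | h | h
  · obtain ⟨h1, h2⟩ := main_pos s k hs hk (-A) (by linarith)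
    have en : ∀ t : ℝ, psi0 (-A / √t) = - psi0 (A / √t) := fun t => by
      rw [neg_div, psi0_neg]
    simp only [en, neg_mul, neg_sq, integral_neg] at h1 h2
    refine ⟨?_, ?_⟩
    · simpa using h1.neg
    · rw [Real.sign_of_neg h]
      linarith
  · subst h
    simp [psi0]
  · rw [Real.sign_of_pos h]
    exact main_pos s k hs hk A h

theorem stmt5 (s k : ℝ) (hs : 0 < s) (hk : 0 < k) (A : ℝ) :
    (∫ t in Set.Ioi (0:ℝ),
        stdCdf (A / Real.sqrt t) *
          ((s / 2) ^ (k / 2) / Real.Gamma (k / 2) * t ^ (-k / 2 - 1) *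
            Real.exp (-s / (2 * t)))) =
      1 / 2 + Real.sign A / 2 * regIncBeta (A ^ 2 / (A ^ 2 + s)) (1 / 2) (k / 2) := by
  obtain ⟨h1, h2⟩ := main_any s k hs hk A
  obtain ⟨i1, i2⟩ := invgamma (k/2) (s/2) (by linarith) (by linarith)
  have e : ∀ t : ℝ, t ^ (-(k/2) - 1) * Real.exp (-(s/2) / t) =
      t ^ (-k / 2 - 1) * Real.exp (-s / (2 * t)) := by
    intro t
    rw [← neg_div, ← neg_div, div_div]
  simp only [e] at i1 i2
  set C := (s / 2) ^ (k / 2) / Real.Gamma (k / 2) with hC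
  have hfun : ∀ t : ℝ, stdCdf (A / √t) * (C * t ^ (-k / 2 - 1) * Real.exp (-s / (2 * t))) =
      (1 / 2 * C) * (t ^ (-k / 2 - 1) * Real.exp (-s / (2 * t))) +
      ((√(2 * Real.pi))⁻¹ * C) *
        (psi0 (A / √t) * (t ^ (-k / 2 - 1) * Real.exp (-s / (2 * t)))) := by
    intro t
    rw [stdCdf_eq_s5]; ring
  simp only [hfun]
  rw [integral_add (i1.const_mul _) (h1.const_mul _), integral_const_mul, integral_const_mul,
    h2, i2]
  congr 1
  have g1 := (Real.Gamma_pos_of_pos (show 0 < k/2 by linarith)).ne'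
  have g2 : (s/2) ^ (k/2) ≠ 0 := by positivity
  rw [hC, Real.rpow_neg (by positivity)]
  field_simp
end
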